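/- arXiv:2206.15339 — 9 statements merged into one kernel-verified Lean document; each statement's English description precedes it below -/
import Mathlib

section
/- Let A and B be nonempty compact subsets of the Euclidean plane with Hausdorff distance hausdorffDist A B = 1, and let α ∈ [0,1]. Then the Voronoi morph T_α(A,B) satisfies hausdorffDist A (T_α(A,B)) = α and hausdorffDist B (T_α(A,B)) = 1 − α. -/
open Metric Set Pointwise

noncomputable section

/-- The Euclidean plane. -/
abbrev Plane := EuclideanSpace ℝ (Fin 2)

/-- The Voronoi morph: each point of `A` is moved a fraction `α` of the way towards a
nearest point of `B`, and each point of `B` is moved a fraction `1 - α` of the way towards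
a nearest point of `A`; all nearest points are used when they are not unique. -/
def voronoiMorph (A B : Set Plane) (α : ℝ) : Set Plane :=
  {p | ∃ a ∈ A, ∃ b ∈ B, dist a b = Metric.infDist a B ∧ p = (1 - α) • a + α • b} ∪
  {p | ∃ b ∈ B, ∃ a ∈ A, dist b a = Metric.infDist b A ∧ p = (1 - α) • a + α • b}

/-- The dilation morph `S_α(A,B) = (A ⊕ D_α) ∩ (B ⊕ D_{1-α})`. -/
def dilationMorph (A B : Set Plane) (α : ℝ) : Set Plane :=
  (A + Metric.closedBall (0 : Plane) α) ∩ (B + Metric.closedBall (0 : Plane) (1 - α))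

/-- The closing of a set by a disk of radius `φ`: dilation followed by erosion. -/
def closing (X : Set Plane) (φ : ℝ) : Set Plane :=
  ((X + Metric.closedBall (0 : Plane) φ)ᶜ + Metric.closedBall (0 : Plane) φ)ᶜ

/-- The mixed morph `M_{α,φ}(A,B)`. -/
def mixedMorph (A B : Set Plane) (α φ : ℝ) : Set Plane :=
  closing (voronoiMorph A B α) φ ∩ dilationMorph A B α

/-!
Join every point of `A` or `B` to its nearest points in the other set. This gives a relation between
`A` and `B` whose pairs are at distance at most `d = hausdorffDist A B`, and the Voronoi morph
slides all pairs along their segments simultaneously. Between the times `s ≤ t` no point moves by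
more than `(t - s) * d`. By the triangle inequality through the two intermediate sets, the
stages from `0` to `s`, from `s` to `t` and from `t` to `1` have Hausdorff lengths summing to at
least `d`, so all three bounds are equalities: the morph is a constant-speed geodesic.
-/

section HausdorffEDist

open scoped ENNReal

lemma hausdorffEDist_image_image_le {ι X : Type*} [PseudoEMetricSpace X] {f g : ι → X} {s : Set ι}
    {r : ℝ≥0∞} (h : ∀ i ∈ s, edist (f i) (g i) ≤ r) : hausdorffEDist (f '' s) (g '' s) ≤ r :=
  hausdorffEDist_le_of_mem_edist
    (forall_mem_image.2 fun i hi ↦ ⟨g i, mem_image_of_mem g hi, h i hi⟩)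
    (forall_mem_image.2 fun i hi ↦ ⟨f i, mem_image_of_mem f hi, edist_comm (f i) (g i) ▸ h i hi⟩)

end HausdorffEDist

section DisplacementInterpolation

variable {V P : Type*} [SeminormedAddCommGroup V] [NormedSpace ℝ V] [PseudoMetricSpace P]
  [NormedAddTorsor V P]

/-- The set reached at time `t` when, for every pair in the relation `R`, a particle travels at
constant speed along the segment from the first point of the pair (at time `0`) to the second
(at time `1`). -/
def displacementInterpolation (R : Set (P × P)) (t : ℝ) : Set P :=
  (fun x ↦ AffineMap.lineMap x.1 x.2 t) '' R

lemma displacementInterpolation_zero (R : Set (P × P)) :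
    displacementInterpolation R 0 = Prod.fst '' R := by
  simp only [displacementInterpolation, AffineMap.lineMap_apply_zero]

lemma displacementInterpolation_one (R : Set (P × P)) :
    displacementInterpolation R 1 = Prod.snd '' R := by
  simp only [displacementInterpolation, AffineMap.lineMap_apply_one]

lemma hausdorffEDist_displacementInterpolation_le {R : Set (P × P)} {d : ℝ}
    (hR : ∀ x ∈ R, dist x.1 x.2 ≤ d) (s t : ℝ) :
    hausdorffEDist (displacementInterpolation R s) (displacementInterpolation R t) ≤
      ENNReal.ofReal (dist s t * d) := by
  refine hausdorffEDist_image_image_le fun x hx ↦ ?_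
  rw [edist_dist, dist_lineMap_lineMap]
  gcongr
  exact hR x hx

theorem hausdorffDist_displacementInterpolation {R : Set (P × P)}
    (hR : ∀ x ∈ R, dist x.1 x.2 ≤ hausdorffDist (Prod.fst '' R) (Prod.snd '' R))
    {s t : ℝ} (hs : s ∈ Icc (0 : ℝ) 1) (ht : t ∈ Icc (0 : ℝ) 1) :
    hausdorffDist (displacementInterpolation R s) (displacementInterpolation R t) =
      dist s t * hausdorffDist (Prod.fst '' R) (Prod.snd '' R) := by
  wlog hst : s ≤ t generalizing s t
  · rw [hausdorffDist_comm, dist_comm]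
    exact this ht hs (le_of_not_ge hst)
  set T := displacementInterpolation R with hT
  rw [← displacementInterpolation_zero, ← displacementInterpolation_one, ← hT] at hR ⊢
  set d := hausdorffDist (T 0) (T 1)
  have edist_le (u v : ℝ) : hausdorffEDist (T u) (T v) ≤ ENNReal.ofReal (dist u v * d) :=
    hausdorffEDist_displacementInterpolation_le hR u v
  have dist_le {u v : ℝ} (huv : u ≤ v) : hausdorffDist (T u) (T v) ≤ (v - u) * d := by
    rw [← abs_of_nonneg (sub_nonneg.2 huv), ← Real.dist_eq, dist_comm]
    exact ENNReal.toReal_le_of_le_ofReal (mul_nonneg dist_nonneg hausdorffDist_nonneg)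
      (edist_le u v)
  have triangle (u v w : ℝ) :
      hausdorffDist (T u) (T w) ≤ hausdorffDist (T u) (T v) + hausdorffDist (T v) (T w) :=
    hausdorffDist_triangle (ne_top_of_le_ne_top ENNReal.ofReal_ne_top (edist_le u v))
  rw [dist_comm, Real.dist_eq, abs_of_nonneg (sub_nonneg.2 hst)]
  refine le_antisymm (dist_le hst) ?_
  have via_s_and_t :
      d ≤ hausdorffDist (T 0) (T s) + (hausdorffDist (T s) (T t) + hausdorffDist (T t) (T 1)) :=
    (triangle 0 s 1).trans (by gcongr; exact triangle s t 1)
  linarith [dist_le hs.1, dist_le ht.2]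

end DisplacementInterpolation

section NearestPairs

variable {X : Type*} [PseudoMetricSpace X] {A B : Set X}

/-- The relation between `A` and `B` underlying the Voronoi morph: pairs in `A × B` one of whose
points is a nearest point, in its set, to the other. -/
def nearestPairs (A B : Set X) : Set (X × X) :=
  {x | x.1 ∈ A ∧ x.2 ∈ B ∧ (dist x.1 x.2 = infDist x.1 B ∨ dist x.2 x.1 = infDist x.2 A)}

lemma fst_image_nearestPairs (hB : ∀ a ∈ A, ∃ b ∈ B, infDist a B = dist a b) :
    Prod.fst '' nearestPairs A B = A := by
  refine Subset.antisymm (image_subset_iff.2 fun x hx ↦ hx.1) fun a ha ↦ ?_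
  obtain ⟨b, hb, hab⟩ := hB a ha
  exact ⟨(a, b), ⟨ha, hb, .inl hab.symm⟩, rfl⟩

lemma snd_image_nearestPairs (hA : ∀ b ∈ B, ∃ a ∈ A, infDist b A = dist b a) :
    Prod.snd '' nearestPairs A B = B := by
  refine Subset.antisymm (image_subset_iff.2 fun x hx ↦ hx.2.1) fun b hb ↦ ?_
  obtain ⟨a, ha, hba⟩ := hA b hb
  exact ⟨(a, b), ⟨ha, hb, .inr hba.symm⟩, rfl⟩

lemma dist_le_hausdorffDist_of_mem_nearestPairs (hAB : hausdorffEDist A B ≠ ⊤) {x : X × X}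
    (hx : x ∈ nearestPairs A B) : dist x.1 x.2 ≤ hausdorffDist A B := by
  obtain ⟨hxA, hxB, hx | hx⟩ := hx
  · exact hx ▸ infDist_le_hausdorffDist_of_mem hxA hAB
  · rw [dist_comm, hx, hausdorffDist_comm]
    exact infDist_le_hausdorffDist_of_mem hxB (hausdorffEDist_comm (s := A) ▸ hAB)

end NearestPairs

lemma voronoiMorph_eq_displacementInterpolation (A B : Set Plane) (α : ℝ) :
    voronoiMorph A B α = displacementInterpolation (nearestPairs A B) α := by
  ext p
  simp only [voronoiMorph, displacementInterpolation, nearestPairs, AffineMap.lineMap_apply_module,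
    mem_union, mem_ofPred_eq, mem_image, Prod.exists]
  grind

theorem voronoiMorph_hausdorffDist_general {V P : Type*} [SeminormedAddCommGroup V]
    [NormedSpace ℝ V] [PseudoMetricSpace P] [NormedAddTorsor V P] {A B : Set P}
    (hA : ∀ b ∈ B, ∃ a ∈ A, infDist b A = dist b a)
    (hB : ∀ a ∈ A, ∃ b ∈ B, infDist a B = dist a b) (hAB : hausdorffEDist A B ≠ ⊤)
    {α : ℝ} (hα : α ∈ Icc (0 : ℝ) 1) :
    hausdorffDist A (displacementInterpolation (nearestPairs A B) α) = α * hausdorffDist A B ∧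
    hausdorffDist B (displacementInterpolation (nearestPairs A B) α) =
      (1 - α) * hausdorffDist A B := by
  have hfst := fst_image_nearestPairs hB
  have hsnd := snd_image_nearestPairs hA
  have geodesic {t : ℝ} (ht : t ∈ Icc (0 : ℝ) 1) :
      hausdorffDist (displacementInterpolation (nearestPairs A B) t)
        (displacementInterpolation (nearestPairs A B) α) = dist t α * hausdorffDist A B := by
    have hdist : hausdorffDist (Prod.fst '' nearestPairs A B) (Prod.snd '' nearestPairs A B) =
        hausdorffDist A B := by rw [hfst, hsnd]
    rw [← hdist]
    exact hausdorffDist_displacementInterpolation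
      (fun x hx ↦ hdist ▸ dist_le_hausdorffDist_of_mem_nearestPairs hAB hx) ht hα
  constructor
  · simpa [displacementInterpolation_zero, hfst, abs_of_nonneg hα.1] using
      geodesic (left_mem_Icc.2 zero_le_one)
  · simpa [displacementInterpolation_one, hsnd, Real.dist_eq,
      abs_of_nonneg (sub_nonneg.2 hα.2)] using geodesic (right_mem_Icc.2 zero_le_one)

theorem voronoiMorph_hausdorffDist (A B : Set Plane) (hAne : A.Nonempty) (hBne : B.Nonempty)
    (hA : IsCompact A) (hB : IsCompact B) (hAB : Metric.hausdorffDist A B = 1)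
    (α : ℝ) (hα : α ∈ Set.Icc (0 : ℝ) 1) :
    Metric.hausdorffDist A (voronoiMorph A B α) = α ∧
    Metric.hausdorffDist B (voronoiMorph A B α) = 1 - α := by
  simpa only [voronoiMorph_eq_displacementInterpolation, hAB, mul_one] using
    voronoiMorph_hausdorffDist_general (fun b _ ↦ hA.exists_infDist_eq_dist hAne b)
      (fun a _ ↦ hB.exists_infDist_eq_dist hBne a)
      (hausdorffEDist_ne_top_of_nonempty_of_bounded hAne hBne hA.isBounded hB.isBounded) hα
end
end

section
/- Let B be a nonempty compact subset of the Euclidean plane, let a₁, a₂ be points of the plane, and let b₁, b₂ ∈ B satisfy dist a₁ b₁ = Metric.infDist a₁ B and dist a₂ b₂ = Metric.infDist a₂ B (i.e., bᵢ is a nearest point of B to aᵢ). If a point p lies on both closed segments [a₁, b₁] and [a₂, b₂], then dist p b₁ = dist p b₂. -/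
open Metric Set Pointwise

noncomputable section

theorem dist_eq_infDist_of_dist_add_dist_eq {X : Type*} [PseudoMetricSpace X] {B : Set X}
    {a b p : X} (hb : b ∈ B) (hab : dist a b = infDist a B)
    (hp : dist a p + dist p b = dist a b) : dist p b = infDist p B := by
  refine le_antisymm ?_ (infDist_le_dist_of_mem hb)
  have h_infDist : infDist a B ≤ infDist p B + dist a p := infDist_le_infDist_add_dist
  linarith

theorem shortest_paths_meet_dist_eq_general {X : Type*} [PseudoMetricSpace X] {B : Set X}
    {a₁ a₂ b₁ b₂ p : X} (hb₁ : b₁ ∈ B) (hb₂ : b₂ ∈ B)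
    (h₁ : dist a₁ b₁ = infDist a₁ B) (h₂ : dist a₂ b₂ = infDist a₂ B)
    (hp₁ : dist a₁ p + dist p b₁ = dist a₁ b₁) (hp₂ : dist a₂ p + dist p b₂ = dist a₂ b₂) :
    dist p b₁ = dist p b₂ :=
  calc
    dist p b₁ = infDist p B := dist_eq_infDist_of_dist_add_dist_eq hb₁ h₁ hp₁
    _ = dist p b₂ := (dist_eq_infDist_of_dist_add_dist_eq hb₂ h₂ hp₂).symm

theorem shortest_paths_meet_dist_eq (B : Set Plane) (hBne : B.Nonempty) (hB : IsCompact B)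
    (a₁ a₂ : Plane) (b₁ b₂ : Plane) (hb₁ : b₁ ∈ B) (hb₂ : b₂ ∈ B)
    (h₁ : dist a₁ b₁ = Metric.infDist a₁ B) (h₂ : dist a₂ b₂ = Metric.infDist a₂ B)
    (p : Plane) (hp₁ : p ∈ segment ℝ a₁ b₁) (hp₂ : p ∈ segment ℝ a₂ b₂) :
    dist p b₁ = dist p b₂ :=
  shortest_paths_meet_dist_eq_general hb₁ hb₂ h₁ h₂
    (dist_add_dist_of_mem_segment hp₁) (dist_add_dist_of_mem_segment hp₂)
end
end

section
/- Let B be a nonempty compact subset of the Euclidean plane and let α ∈ (0,1). Let a₁, a₂ be points of the plane and let b₁, b₂ ∈ B satisfy dist a₁ b₁ = Metric.infDist a₁ B and dist a₂ b₂ = Metric.infDist a₂ B. If (1−α)•a₁ + α•b₁ = (1−α)•a₂ + α•b₂, then a₁ = a₂ and b₁ = b₂. In other words, for α strictly between 0 and 1, the map sending a point together with a nearest point of B to the convex combination at parameter α is injective. -/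
open Metric Set Pointwise

noncomputable section

/-!
Let `p` lie on the segment from `a` to a nearest point `b` of `B`, with `p ≠ a`. If some `c ∈ B`
is at least as close to `p` as `b` is, then `dist a c ≤ dist a p + dist p c ≤ dist a b`, so the
triangle inequality is an equality. In a strictly convex space `c` then lies on the ray from `a`
through `p`, at the same distance beyond `p` as `b`, which forces `c = b`. If `p` lies on two such
segments, one of their two endpoints in `B` is at least as close to `p` as the other, so the
endpoints agree; the starting points then agree because a homothety of nonzero ratio is injective.
-/

section NearestPoint

open AffineMap

variable {E P : Type*} [NormedAddCommGroup E] [NormedSpace ℝ E] [MetricSpace P]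
  [NormedAddTorsor E P]

theorem eq_of_wbtw_of_wbtw_of_dist_eq {a p b c : P} (hpa : p ≠ a) (hb : Wbtw ℝ a p b)
    (hc : Wbtw ℝ a p c) (hdist : dist p b = dist p c) : b = c := by
  have hray : SameRay ℝ (b -ᵥ p) (c -ᵥ p) :=
    hb.sameRay_vsub.symm.trans hc.sameRay_vsub fun h ↦ absurd (vsub_eq_zero_iff_eq.1 h) hpa
  have hnorm : ‖b -ᵥ p‖ = ‖c -ᵥ p‖ := by
    rwa [← dist_eq_norm_vsub, ← dist_eq_norm_vsub, dist_comm b, dist_comm c]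
  exact vsub_left_cancel (hray.norm_eq_iff.1 hnorm)

variable [StrictConvexSpace ℝ E]

theorem eq_of_wbtw_of_dist_le {a p b c : P} (hpa : p ≠ a) (hp : Wbtw ℝ a p b)
    (ha : dist a b ≤ dist a c) (hpc : dist p c ≤ dist p b) : b = c := by
  have hpb : dist a p + dist p b = dist a b := hp.dist_add_dist
  have htri : dist a c ≤ dist a p + dist p c := dist_triangle a p c
  have hapc : Wbtw ℝ a p c := dist_add_dist_eq_iff.1 (by linarith)
  exact eq_of_wbtw_of_wbtw_of_dist_eq hpa hp hapc (by linarith)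

theorem eq_of_dist_lineMap_le {a b c : P} {t : ℝ} (ht : t ∈ Ioc (0 : ℝ) 1)
    (ha : dist a b ≤ dist a c)
    (hc : dist (lineMap a b t) c ≤ dist (lineMap a b t) b) : b = c := by
  rcases eq_or_ne a b with rfl | hab
  · simpa using hc
  · refine eq_of_wbtw_of_dist_le ?_ ⟨t, Ioc_subset_Icc_self ht, rfl⟩ ha hc
    simp [lineMap_eq_left_iff, hab, ht.1.ne']

theorem voronoiMorph_combination_injective_general {B : Set P} {α : ℝ}
    (hα : α ∈ Ioo (0 : ℝ) 1) {a₁ a₂ b₁ b₂ : P} (hb₁ : b₁ ∈ B) (hb₂ : b₂ ∈ B)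
    (h₁ : dist a₁ b₁ = infDist a₁ B) (h₂ : dist a₂ b₂ = infDist a₂ B)
    (heq : lineMap a₁ b₁ α = lineMap a₂ b₂ α) :
    a₁ = a₂ ∧ b₁ = b₂ := by
  have hα_Ioc : α ∈ Ioc (0 : ℝ) 1 := Ioo_subset_Ioc_self hα
  have h₁₂ : dist a₁ b₁ ≤ dist a₁ b₂ := h₁.trans_le (infDist_le_dist_of_mem hb₂)
  have h₂₁ : dist a₂ b₂ ≤ dist a₂ b₁ := h₂.trans_le (infDist_le_dist_of_mem hb₁)
  have hb : b₁ = b₂ := by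
    rcases le_total (dist (lineMap a₁ b₁ α) b₂) (dist (lineMap a₁ b₁ α) b₁) with hle | hle
    · exact eq_of_dist_lineMap_le hα_Ioc h₁₂ hle
    · exact (eq_of_dist_lineMap_le hα_Ioc h₂₁ (heq ▸ hle)).symm
  subst hb
  have hhom : homothety b₁ (1 - α) a₁ = homothety b₁ (1 - α) a₂ := by
    simpa only [homothety_eq_lineMap, lineMap_apply_one_sub] using heq
  exact ⟨homothety_injective b₁ (sub_ne_zero.2 hα.2.ne') hhom, rfl⟩

end NearestPoint

theorem voronoiMorph_combination_injective (B : Set Plane) (hBne : B.Nonempty)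
    (hB : IsCompact B) (α : ℝ) (hα : α ∈ Set.Ioo (0 : ℝ) 1)
    (a₁ a₂ : Plane) (b₁ b₂ : Plane) (hb₁ : b₁ ∈ B) (hb₂ : b₂ ∈ B)
    (h₁ : dist a₁ b₁ = Metric.infDist a₁ B) (h₂ : dist a₂ b₂ = Metric.infDist a₂ B)
    (heq : (1 - α) • a₁ + α • b₁ = (1 - α) • a₂ + α • b₂) :
    a₁ = a₂ ∧ b₁ = b₂ := by
  have hline : AffineMap.lineMap a₁ b₁ α = AffineMap.lineMap a₂ b₂ α := by
    simpa only [AffineMap.lineMap_apply_module] using heq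
  exact voronoiMorph_combination_injective_general hα hb₁ hb₂ h₁ h₂ hline
end
end

section
/- Let A and B be nonempty compact subsets of the Euclidean plane, let α ∈ [0,1], and let φ, ψ be nonnegative reals with φ ≤ ψ. Then the mixed morphs satisfy M_{α,φ}(A,B) ⊆ M_{α,ψ}(A,B). -/
open Metric Set Pointwise

noncomputable section

/-!
Eroding by a disk picks out the centres of the disks that fit inside a set, so `x` lies in the
closing of `X` by radius `φ` exactly when the disk of radius `φ` about `x` is contained in
`X ⊕ D_φ`. Adding `D_{ψ-φ}` to both sides of this inclusion gives the same condition for `ψ ≥ φ`.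
-/

theorem mem_compl_compl_add_iff {G : Type*} [AddGroup G] {s t : Set G} {x : G} :
    x ∈ (sᶜ + t)ᶜ ↔ {x} - t ⊆ s := by
  rw [singleton_sub, image_subset_iff]
  constructor
  · intro hx k hk
    by_contra hs
    exact hx ⟨x - k, hs, k, hk, sub_add_cancel x k⟩
  · rintro hx ⟨y, hy, k, hk, rfl⟩
    exact hy (by simpa using hx hk)

theorem mem_compl_compl_add_closedBall_iff {E : Type*} [SeminormedAddCommGroup E]
    {s : Set E} {x : E} {r : ℝ} :
    x ∈ (sᶜ + closedBall (0 : E) r)ᶜ ↔ closedBall x r ⊆ s := by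
  rw [mem_compl_compl_add_iff, singleton_sub_closedBall_zero]

theorem closedBall_subset_add_closedBall_mono {E : Type*} [SeminormedAddCommGroup E]
    [NormedSpace ℝ E] [ProperSpace E] {s : Set E} {x : E} {r R : ℝ} (hr : 0 ≤ r) (hrR : r ≤ R)
    (h : closedBall x r ⊆ s + closedBall 0 r) :
    closedBall x R ⊆ s + closedBall 0 R := by
  have enlarge (y : E) : closedBall y r + closedBall 0 (R - r) = closedBall y R := by
    rw [closedBall_add_closedBall hr (sub_nonneg.2 hrR), add_zero, add_sub_cancel]
  calc closedBall x R
      = closedBall x r + closedBall 0 (R - r) := (enlarge x).symm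
    _ ⊆ s + closedBall 0 r + closedBall 0 (R - r) := add_subset_add_right h
    _ = s + closedBall 0 R := by rw [add_assoc, enlarge 0]

theorem mem_closing_iff {X : Set Plane} {φ : ℝ} {x : Plane} :
    x ∈ closing X φ ↔ closedBall x φ ⊆ X + closedBall 0 φ :=
  mem_compl_compl_add_closedBall_iff

theorem closing_mono_radius (X : Set Plane) {φ ψ : ℝ} (hφ : 0 ≤ φ) (hφψ : φ ≤ ψ) :
    closing X φ ⊆ closing X ψ := fun _ hx ↦
  mem_closing_iff.2 (closedBall_subset_add_closedBall_mono hφ hφψ (mem_closing_iff.1 hx))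

theorem mixedMorph_mono_general (A B : Set Plane) (α : ℝ) {φ ψ : ℝ} (hφ : 0 ≤ φ) (hφψ : φ ≤ ψ) :
    mixedMorph A B α φ ⊆ mixedMorph A B α ψ :=
  inter_subset_inter_left _ (closing_mono_radius _ hφ hφψ)

theorem mixedMorph_mono (A B : Set Plane) (hAne : A.Nonempty) (hBne : B.Nonempty)
    (hA : IsCompact A) (hB : IsCompact B) (α : ℝ) (hα : α ∈ Set.Icc (0 : ℝ) 1)
    (φ ψ : ℝ) (hφ : 0 ≤ φ) (hψ : 0 ≤ ψ) (hφψ : φ ≤ ψ) :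
    mixedMorph A B α φ ⊆ mixedMorph A B α ψ :=
  mixedMorph_mono_general A B α hφ hφψ
end
end

section
/- Let A and B be nonempty compact subsets of the Euclidean plane with hausdorffDist A B ≤ 1, and let α ∈ [0,1]. Then the Voronoi morph is contained in the dilation morph: T_α(A,B) ⊆ S_α(A,B). -/
open Metric Set Pointwise

noncomputable section

/-!
A nearest-point pair joins points of `A` and `B` at distance at most the Hausdorff distance `d`
of the two sets, and the point that divides the segment between them in the ratio `α : 1 - α` is at
distance at most `α * d` from the first endpoint and `(1 - α) * d` from the second.
-/

theorem dist_le_hausdorffDist_of_nearest {X : Type*} [PseudoMetricSpace X] {A B : Set X} {a b : X}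
    (hfin : hausdorffEDist A B ≠ ⊤) (ha : a ∈ A) (hb : b ∈ B)
    (hab : dist a b = infDist a B ∨ dist b a = infDist b A) : dist a b ≤ hausdorffDist A B := by
  rcases hab with hab | hba
  · exact hab.trans_le (infDist_le_hausdorffDist_of_mem ha hfin)
  · rw [dist_comm, hausdorffDist_comm]
    rw [hausdorffEDist_comm] at hfin
    exact hba.trans_le (infDist_le_hausdorffDist_of_mem hb hfin)

section NormedSpace

variable {E : Type*} [SeminormedAddCommGroup E] {A B : Set E} {a b x : E} {α r : ℝ}

theorem mem_add_closedBall_zero : x ∈ A + closedBall (0 : E) r ↔ ∃ a ∈ A, dist x a ≤ r := by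
  constructor
  · rintro ⟨a, ha, v, hv, rfl⟩
    exact ⟨a, ha, by simpa only [dist_self_add_left, mem_closedBall_zero_iff] using hv⟩
  · rintro ⟨a, ha, hxa⟩
    exact ⟨a, ha, x - a, by rwa [mem_closedBall_zero_iff, ← dist_eq_norm], add_sub_cancel a x⟩

variable [NormedSpace ℝ E]

theorem lineMap_mem_add_closedBall_left (ha : a ∈ A) (hab : dist a b ≤ r) (hα : 0 ≤ α) :
    AffineMap.lineMap a b α ∈ A + closedBall (0 : E) (α * r) := by
  refine mem_add_closedBall_zero.2 ⟨a, ha, ?_⟩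
  rw [dist_lineMap_left, Real.norm_of_nonneg hα]
  gcongr

theorem lineMap_mem_add_closedBall_right (hb : b ∈ B) (hab : dist a b ≤ r) (hα : α ≤ 1) :
    AffineMap.lineMap a b α ∈ B + closedBall (0 : E) ((1 - α) * r) := by
  rw [← AffineMap.lineMap_apply_one_sub]
  exact lineMap_mem_add_closedBall_left hb (by rwa [dist_comm]) (sub_nonneg.2 hα)

/-- The Voronoi morph in a real seminormed space, extending `voronoiMorph` beyond the plane.
The two kinds of nearest-point pairs are merged into one disjunction. -/
def nearestPointMorph (A B : Set E) (α : ℝ) : Set E :=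
  {p | ∃ a ∈ A, ∃ b ∈ B, (dist a b = infDist a B ∨ dist b a = infDist b A) ∧
    AffineMap.lineMap a b α = p}

theorem voronoiMorph_subset_dilationMorph_general (hfin : hausdorffEDist A B ≠ ⊤)
    (hAB : hausdorffDist A B ≤ r) (hα : α ∈ Set.Icc (0 : ℝ) 1) :
    nearestPointMorph A B α ⊆
      (A + closedBall (0 : E) (α * r)) ∩ (B + closedBall (0 : E) ((1 - α) * r)) := by
  rintro _ ⟨a, ha, b, hb, hnearest, rfl⟩
  have hab : dist a b ≤ r := (dist_le_hausdorffDist_of_nearest hfin ha hb hnearest).trans hAB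
  exact ⟨lineMap_mem_add_closedBall_left ha hab hα.1, lineMap_mem_add_closedBall_right hb hab hα.2⟩

end NormedSpace

theorem voronoiMorph_eq_nearestPointMorph (A B : Set Plane) (α : ℝ) :
    voronoiMorph A B α = nearestPointMorph A B α := by
  ext p
  simp only [voronoiMorph, nearestPointMorph, AffineMap.lineMap_apply_module, Set.mem_union,
    Set.mem_ofPred_eq]
  grind

theorem voronoiMorph_subset_dilationMorph (A B : Set Plane) (hAne : A.Nonempty)
    (hBne : B.Nonempty) (hA : IsCompact A) (hB : IsCompact B)
    (hAB : Metric.hausdorffDist A B ≤ 1) (α : ℝ) (hα : α ∈ Set.Icc (0 : ℝ) 1) :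
    voronoiMorph A B α ⊆ dilationMorph A B α := by
  have hfin := hausdorffEDist_ne_top_of_nonempty_of_bounded hAne hBne hA.isBounded hB.isBounded
  simpa only [voronoiMorph_eq_nearestPointMorph, dilationMorph, mul_one] using
    voronoiMorph_subset_dilationMorph_general hfin hAB hα
end
end

section
/- Let A and B be nonempty compact subsets of the Euclidean plane with hausdorffDist A B ≤ 1, let α ∈ [0,1] and φ ≥ 0. Then the Voronoi morph is contained in the mixed morph: T_α(A,B) ⊆ M_{α,φ}(A,B). -/
open Metric Set Pointwise

noncomputable section

/-! A point of the Voronoi morph divides, in the ratio `α : 1 - α`, a segment `[a, b]` with `a ∈ A`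
and `b ∈ B` which realises the distance from one endpoint to the other set, so its length is at most
the Hausdorff distance. If that distance is at most `1`, the point is within `α` of `a` and within
`1 - α` of `b`. Closing by a disk removes nothing: were a point `x` of `X` equal to `y + d` with
`y ∉ X ⊕ D_φ` and `d ∈ D_φ`, then `y = x + (-d)` would lie in `X ⊕ D_φ` after all. -/

section Closing

variable {G : Type*} [AddGroup G]

/-- The morphological closing of `X` by the structuring element `D`. Both sums are with `D` itself,
whereas the erosion step calls for `-D`, so the notion is the usual one for symmetric `D` only. -/
def closingBy (D X : Set G) : Set G :=
  ((X + D)ᶜ + D)ᶜ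

theorem subset_closingBy {D : Set G} (hD : -D = D) (X : Set G) : X ⊆ closingBy D X := by
  rintro _ hx ⟨y, hy, d, hd, rfl⟩
  have hneg : -d ∈ D := hD ▸ neg_mem_neg.2 hd
  exact hy ⟨y + d, hx, -d, hneg, add_neg_cancel_right y d⟩

end Closing

section Interpolation

variable {E : Type*} [SeminormedAddCommGroup E]

theorem closedBall_subset_add_closedBall_zero {A : Set E} {a : E} (ha : a ∈ A) (r : ℝ) :
    closedBall a r ⊆ A + closedBall 0 r := by
  rw [← singleton_add_closedBall_zero]
  exact add_subset_add_right (singleton_subset_iff.2 ha)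

variable [NormedSpace ℝ E] {A B : Set E} {a b : E} {α : ℝ}

/-- The Voronoi morph of two sets in a seminormed space; it is `voronoiMorph` in the plane. -/
def voronoiInterpolation (A B : Set E) (α : ℝ) : Set E :=
  {p | ∃ a ∈ A, ∃ b ∈ B, dist a b = infDist a B ∧ p = (1 - α) • a + α • b} ∪
  {p | ∃ b ∈ B, ∃ a ∈ A, dist b a = infDist b A ∧ p = (1 - α) • a + α • b}

/-- The dilation morph of two sets in a seminormed space; it is `dilationMorph` in the plane. -/
def dilationInterpolation (A B : Set E) (α : ℝ) : Set E :=
  (A + closedBall 0 α) ∩ (B + closedBall 0 (1 - α))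

theorem lineMap_mem_add_closedBall_zero (ha : a ∈ A) (hab : dist a b ≤ 1) (hα : 0 ≤ α) :
    AffineMap.lineMap a b α ∈ A + closedBall 0 α := by
  refine closedBall_subset_add_closedBall_zero ha α ?_
  rw [mem_closedBall, dist_lineMap_left, Real.norm_of_nonneg hα]
  exact mul_le_of_le_one_right hα hab

theorem lineMap_mem_dilationInterpolation (ha : a ∈ A) (hb : b ∈ B) (hab : dist a b ≤ 1)
    (hα : α ∈ Icc (0 : ℝ) 1) : AffineMap.lineMap a b α ∈ dilationInterpolation A B α := by
  refine ⟨lineMap_mem_add_closedBall_zero ha hab hα.1, ?_⟩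
  rw [← AffineMap.lineMap_apply_one_sub]
  exact lineMap_mem_add_closedBall_zero hb (dist_comm a b ▸ hab) (sub_nonneg.2 hα.2)

theorem exists_dist_le_hausdorffDist_of_mem_voronoiInterpolation {p : E}
    (hfin : hausdorffEDist A B ≠ ⊤) (hp : p ∈ voronoiInterpolation A B α) :
    ∃ a ∈ A, ∃ b ∈ B, dist a b ≤ hausdorffDist A B ∧ AffineMap.lineMap a b α = p := by
  simp only [AffineMap.lineMap_apply_module]
  rcases hp with ⟨a, ha, b, hb, hnearest, rfl⟩ | ⟨b, hb, a, ha, hnearest, rfl⟩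
  · exact ⟨a, ha, b, hb, hnearest.trans_le (infDist_le_hausdorffDist_of_mem ha hfin), rfl⟩
  · refine ⟨a, ha, b, hb, ?_, rfl⟩
    rw [dist_comm, hnearest, hausdorffDist_comm]
    exact infDist_le_hausdorffDist_of_mem hb (hausdorffEDist_comm.trans_ne hfin)

theorem voronoiInterpolation_subset_dilationInterpolation (hfin : hausdorffEDist A B ≠ ⊤)
    (hAB : hausdorffDist A B ≤ 1) (hα : α ∈ Icc (0 : ℝ) 1) :
    voronoiInterpolation A B α ⊆ dilationInterpolation A B α := by
  intro p hp
  obtain ⟨a, ha, b, hb, hab, rfl⟩ :=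
    exists_dist_le_hausdorffDist_of_mem_voronoiInterpolation hfin hp
  exact lineMap_mem_dilationInterpolation ha hb (hab.trans hAB) hα

theorem voronoiMorph_subset_mixedMorph_general (hfin : hausdorffEDist A B ≠ ⊤)
    (hAB : hausdorffDist A B ≤ 1) (hα : α ∈ Icc (0 : ℝ) 1) (φ : ℝ) :
    voronoiInterpolation A B α ⊆
      closingBy (closedBall 0 φ) (voronoiInterpolation A B α) ∩ dilationInterpolation A B α :=
  subset_inter (subset_closingBy (by rw [neg_closedBall, neg_zero]) _)
    (voronoiInterpolation_subset_dilationInterpolation hfin hAB hα)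

end Interpolation

theorem voronoiMorph_subset_mixedMorph (A B : Set Plane) (hAne : A.Nonempty)
    (hBne : B.Nonempty) (hA : IsCompact A) (hB : IsCompact B)
    (hAB : Metric.hausdorffDist A B ≤ 1) (α : ℝ) (hα : α ∈ Set.Icc (0 : ℝ) 1)
    (φ : ℝ) (hφ : 0 ≤ φ) :
    voronoiMorph A B α ⊆ mixedMorph A B α φ :=
  voronoiMorph_subset_mixedMorph_general
    (hausdorffEDist_ne_top_of_nonempty_of_bounded hAne hBne hA.isBounded hB.isBounded) hAB hα φ
end
end

section
/- Let A and B be nonempty compact subsets of the Euclidean plane with hausdorffDist A B = 1, and let α ∈ [0,1]. Then the dilation morph S_α(A,B) satisfies hausdorffDist A (S_α(A,B)) = α and hausdorffDist B (S_α(A,B)) = 1 − α. -/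
open Metric Set Pointwise

noncomputable section

/-!
When every point of each set has a nearest point in the other, such a pair lies within
`α + β = hausdorffDist A B`, so some point of the segment joining it belongs to both dilations.
This bounds the Hausdorff distances from the morph to `A` and to `B` above by `α` and `β`. Neither
bound can be strict, by the triangle inequality through the morph.
-/

/-- A proximinal set: every point of the space has a nearest point in it. Nonempty compact sets and,
in finite dimension, nonempty closed sets are proximinal. Since the nearest point has to lie in `S`,
the convention `infDist x ∅ = 0` does not make the empty set proximinal. -/
def IsProximinal {X : Type*} [PseudoMetricSpace X] (S : Set X) : Prop :=
  ∀ x, ∃ y ∈ S, infDist x S = dist x y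

section PseudoMetricSpace

variable {X : Type*} [PseudoMetricSpace X] {A B S : Set X} {α β : ℝ}

theorem IsProximinal.of_isCompact (hS : IsCompact S) (hne : S.Nonempty) : IsProximinal S :=
  hS.exists_infDist_eq_dist hne

theorem IsProximinal.exists_dist_le_hausdorffDist (hB : IsProximinal B)
    (hfin : hausdorffEDist A B ≠ ⊤) {a : X} (ha : a ∈ A) :
    ∃ b ∈ B, dist a b ≤ hausdorffDist A B := by
  obtain ⟨b, hb, hab⟩ := hB a
  exact ⟨b, hb, hab ▸ infDist_le_hausdorffDist_of_mem ha hfin⟩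

theorem hausdorffDist_eq_of_hausdorffEDist_le (hα : 0 ≤ α) (hβ : 0 ≤ β)
    (hAB : α + β = hausdorffDist A B) (hA : hausdorffEDist A S ≤ ENNReal.ofReal α)
    (hB : hausdorffEDist B S ≤ ENNReal.ofReal β) :
    hausdorffDist A S = α ∧ hausdorffDist B S = β := by
  have hAS : hausdorffDist A S ≤ α := ENNReal.toReal_le_of_le_ofReal hα hA
  have hBS : hausdorffDist B S ≤ β := ENNReal.toReal_le_of_le_ofReal hβ hB
  have htriangle : α + β ≤ hausdorffDist A S + hausdorffDist B S := by
    rw [hAB, hausdorffDist_comm (s := B)]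
    exact hausdorffDist_triangle (ne_top_of_le_ne_top ENNReal.ofReal_ne_top hA)
  constructor <;> linarith

end PseudoMetricSpace

section SeminormedAddCommGroup

variable {E : Type*} [SeminormedAddCommGroup E] {A B S : Set E} {p : E} {r α β : ℝ}

theorem mem_add_closedBall_zero_iff : p ∈ S + closedBall 0 r ↔ ∃ x ∈ S, dist p x ≤ r := by
  simp only [Set.mem_add, mem_closedBall_zero_iff, dist_eq_norm]
  constructor
  · rintro ⟨x, hx, v, hv, rfl⟩
    exact ⟨x, hx, by rwa [add_sub_cancel_left]⟩
  · rintro ⟨x, hx, hpx⟩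
    exact ⟨x, hx, p - x, hpx, add_sub_cancel x p⟩

/-- The intersection of the dilations of `A` and `B` by closed balls of independent radii `α` and
`β`; the dilation morph of the plane is the case `β = 1 - α`. -/
def dilationInter (A B : Set E) (α β : ℝ) : Set E :=
  (A + closedBall 0 α) ∩ (B + closedBall 0 β)

theorem dilationInter_comm (A B : Set E) (α β : ℝ) :
    dilationInter A B α β = dilationInter B A β α :=
  inter_comm _ _

theorem mem_dilationInter_iff :
    p ∈ dilationInter A B α β ↔ (∃ a ∈ A, dist p a ≤ α) ∧ ∃ b ∈ B, dist p b ≤ β :=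
  and_congr mem_add_closedBall_zero_iff mem_add_closedBall_zero_iff

variable [NormedSpace ℝ E]

theorem hausdorffEDist_dilationInter_le (hα : 0 ≤ α) (hβ : 0 ≤ β)
    (hAB : ∀ a ∈ A, ∃ b ∈ B, dist a b ≤ α + β) :
    hausdorffEDist A (dilationInter A B α β) ≤ ENNReal.ofReal α := by
  refine hausdorffEDist_le_of_mem_edist (fun a ha ↦ ?_) fun p hp ↦ ?_
  · obtain ⟨b, hb, hab⟩ := hAB a ha
    obtain ⟨p, hap, hpb⟩ := exists_dist_le_le hα hβ (add_comm α β ▸ hab)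
    exact ⟨p, mem_dilationInter_iff.2 ⟨⟨a, ha, dist_comm a p ▸ hap⟩, b, hb, hpb⟩,
      (edist_le_ofReal hα).2 hap⟩
  · obtain ⟨a, ha, hpa⟩ := (mem_dilationInter_iff.1 hp).1
    exact ⟨a, ha, (edist_le_ofReal hα).2 hpa⟩

theorem dilationMorph_hausdorffDist_general (hA : IsProximinal A) (hB : IsProximinal B)
    (hfin : hausdorffEDist A B ≠ ⊤) (hα : 0 ≤ α) (hβ : 0 ≤ β)
    (hAB : α + β = hausdorffDist A B) :
    hausdorffDist A (dilationInter A B α β) = α ∧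
    hausdorffDist B (dilationInter A B α β) = β := by
  refine hausdorffDist_eq_of_hausdorffEDist_le hα hβ hAB ?_ ?_
  · refine hausdorffEDist_dilationInter_le hα hβ fun a ha ↦ ?_
    rw [hAB]
    exact hB.exists_dist_le_hausdorffDist hfin ha
  · rw [dilationInter_comm]
    refine hausdorffEDist_dilationInter_le hβ hα fun b hb ↦ ?_
    rw [add_comm, hAB, hausdorffDist_comm]
    exact hA.exists_dist_le_hausdorffDist (hausdorffEDist_comm.trans_ne hfin) hb

end SeminormedAddCommGroup

theorem dilationMorph_hausdorffDist (A B : Set Plane) (hAne : A.Nonempty) (hBne : B.Nonempty)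
    (hA : IsCompact A) (hB : IsCompact B) (hAB : Metric.hausdorffDist A B = 1)
    (α : ℝ) (hα : α ∈ Set.Icc (0 : ℝ) 1) :
    Metric.hausdorffDist A (dilationMorph A B α) = α ∧
    Metric.hausdorffDist B (dilationMorph A B α) = 1 - α := by
  exact dilationMorph_hausdorffDist_general (.of_isCompact hA hAne) (.of_isCompact hB hBne)
    (hausdorffEDist_ne_top_of_nonempty_of_bounded hAne hBne hA.isBounded hB.isBounded)
    hα.1 (sub_nonneg.2 hα.2) ((add_sub_cancel α 1).trans hAB.symm)
end
end

section
/- Let A and B be nonempty compact subsets of the Euclidean plane with hausdorffDist A B = 1, and let α, β ∈ [0,1]. Then the dilation morph is 1-Lipschitz in the time parameter: hausdorffDist (S_α(A,B)) (S_β(A,B)) ≤ |β − α|. -/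
open Metric Set Pointwise

noncomputable section

theorem hausdorffEDist_le_of_subset_add_closedBall {E : Type*} [SeminormedAddCommGroup E]
    {S T : Set E} {δ : ℝ} (hST : S ⊆ T + closedBall 0 δ) (hTS : T ⊆ S + closedBall 0 δ) :
    hausdorffEDist S T ≤ ENNReal.ofReal δ := by
  have exists_edist_le {U V : Set E} (hUV : U ⊆ V + closedBall 0 δ) :
      ∀ x ∈ U, ∃ y ∈ V, edist x y ≤ ENNReal.ofReal δ := by
    intro x hx
    obtain ⟨y, hy, v, hv, rfl⟩ := hUV hx
    refine ⟨y, hy, ?_⟩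
    rw [edist_dist, dist_self_add_left]
    exact ENNReal.ofReal_le_ofReal (mem_closedBall_zero_iff.1 hv)
  exact hausdorffEDist_le_of_mem_edist (exists_edist_le hST) (exists_edist_le hTS)

section NormedSpace

variable {E : Type*} [SeminormedAddCommGroup E] [NormedSpace ℝ E]

theorem closedBall_zero_add_subset_add {s δ : ℝ} (hs : 0 ≤ s) (hδ : 0 ≤ δ) :
    closedBall (0 : E) (s + δ) ⊆ closedBall 0 s + closedBall 0 δ := by
  intro w hw
  obtain ⟨y, hwy, hy⟩ := exists_dist_le_le hδ hs (mem_closedBall.1 hw)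
  exact ⟨y, hy, w - y, mem_closedBall_zero_iff.2 (dist_eq_norm w y ▸ hwy), add_sub_cancel y w⟩

variable (A B : Set E)

/- Moving straight towards a nearby point of `B` by at most `δ` saves the excess `δ` in the distance
to `B` and costs at most `δ` in the distance to `A`. -/
theorem inter_add_closedBall_subset_add_closedBall (r : ℝ) {s δ : ℝ} (hs : 0 ≤ s) (hδ : 0 ≤ δ) :
    (A + closedBall 0 r) ∩ (B + closedBall 0 (s + δ)) ⊆
      (A + closedBall 0 (r + δ)) ∩ (B + closedBall 0 s) + closedBall 0 δ := by
  rintro x ⟨⟨a, ha, u, hu, hau : a + u = x⟩, b, hb, w, hw, hbw : b + w = x⟩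
  obtain ⟨w', hw', v, hv, rfl : w' + v = w⟩ := closedBall_zero_add_subset_add hs hδ hw
  have hx : (b + w') + v = x := by rw [add_assoc, hbw]
  have hy : a + (u - v) = b + w' := by rw [← add_sub_assoc, hau, ← hx, add_sub_cancel_right]
  have huv : u - v ∈ closedBall 0 (r + δ) :=
    mem_closedBall_zero_iff.2 <|
      norm_sub_le_of_le (mem_closedBall_zero_iff.1 hu) (mem_closedBall_zero_iff.1 hv)
  exact ⟨b + w', ⟨⟨a, ha, u - v, huv, hy⟩, add_mem_add hb hw'⟩, v, hv, hx⟩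

theorem hausdorffEDist_inter_add_closedBall_le {r s δ : ℝ} (hr : 0 ≤ r) (hs : 0 ≤ s)
    (hδ : 0 ≤ δ) :
    hausdorffEDist ((A + closedBall 0 r) ∩ (B + closedBall 0 (s + δ)))
      ((A + closedBall 0 (r + δ)) ∩ (B + closedBall 0 s)) ≤ ENNReal.ofReal δ := by
  apply hausdorffEDist_le_of_subset_add_closedBall
  · exact inter_add_closedBall_subset_add_closedBall A B r hs hδ
  · rw [inter_comm, inter_comm (A + _)]
    exact inter_add_closedBall_subset_add_closedBall B A s hr hδ

theorem dilationMorph_lipschitz_general {ρ α β : ℝ} (hα : α ∈ Icc 0 ρ) (hβ : β ∈ Icc 0 ρ) :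
    hausdorffEDist ((A + closedBall 0 α) ∩ (B + closedBall 0 (ρ - α)))
      ((A + closedBall 0 β) ∩ (B + closedBall 0 (ρ - β))) ≤ ENNReal.ofReal |β - α| := by
  wlog hαβ : α ≤ β generalizing α β
  · rw [hausdorffEDist_comm, abs_sub_comm]
    exact this hβ hα (le_of_not_ge hαβ)
  rw [abs_of_nonneg (sub_nonneg.2 hαβ)]
  simpa only [sub_add_sub_cancel, add_sub_cancel] using
    hausdorffEDist_inter_add_closedBall_le A B hα.1 (sub_nonneg.2 hβ.2) (sub_nonneg.2 hαβ)

end NormedSpace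

theorem dilationMorph_lipschitz (A B : Set Plane) (hAne : A.Nonempty) (hBne : B.Nonempty)
    (hA : IsCompact A) (hB : IsCompact B) (hAB : Metric.hausdorffDist A B = 1)
    (α β : ℝ) (hα : α ∈ Set.Icc (0 : ℝ) 1) (hβ : β ∈ Set.Icc (0 : ℝ) 1) :
    Metric.hausdorffDist (dilationMorph A B α) (dilationMorph A B β) ≤ |β - α| :=
  ENNReal.toReal_le_of_le_ofReal (abs_nonneg _) (dilationMorph_lipschitz_general A B hα hβ)
end
end

section
/- Let A and B be nonempty compact subsets of the Euclidean plane and let α ∈ (0,1). Then the Lebesgue measure (area) of the Voronoi morph satisfies volume(T_α(A,B)) ≥ (1−α)² · volume(A) + α² · volume(B). -/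
open Metric Set Pointwise

noncomputable section

/-! Moving `A` towards nearest points of `B` contracts distances at most by the factor `1 - α`,
because the metric projection onto `B` is monotone; so the volume of `A` shrinks at most by the
factor `(1 - α) ^ n` in dimension `n`, and symmetrically for `B`. It remains to see that the two
moved copies meet only in `A ∩ B`, up to a null set. A point of the first copy outside `B`, coming
from `a ∈ A`, lies on the sphere of center `a` and radius `α * infDist a B`. The open ball inside
that sphere consists of points `q` with `(1 - α) * infDist q A < α * infDist q B`, whereas on the
second copy the reverse inequality holds. The overlap outside `B` is therefore porous at each of
its points, hence null by the Lebesgue density theorem. Points of `A ∩ B` are fixed by both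
motions; counting their volume only once suffices since `(1 - α) ^ n + α ^ n ≤ 1`. -/

open AffineMap MeasureTheory Filter Topology Module

open scoped ENNReal NNReal RealInnerProductSpace

section Porosity

/-- Porosity of the set `S` at the point `p`, with ratio `1 / K`: at arbitrarily small scales `r`,
some ball of radius `r` centered within `K * r` of `p` misses `S`. -/
def IsPorousAt {X : Type*} [PseudoMetricSpace X] (K : ℝ) (S : Set X) (p : X) : Prop :=
  ∃ᶠ r in 𝓝[>] (0 : ℝ), ∃ y, p ∈ closedBall y (K * r) ∧ Disjoint S (closedBall y r)

theorem measure_eq_zero_of_forall_isPorousAt {X : Type*} [PseudoMetricSpace X] [MeasurableSpace X]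
    [BorelSpace X] [SecondCountableTopology X] (μ : Measure X) [IsUnifLocDoublingMeasure μ]
    [IsLocallyFiniteMeasure μ] {K : ℝ} {S : Set X} (hS : ∀ p ∈ S, IsPorousAt K S p) :
    μ S = 0 := by
  have hnotMem : ∀ᵐ p ∂μ.restrict S, p ∉ S := by
    filter_upwards [IsUnifLocDoublingMeasure.ae_tendsto_measure_inter_div μ S K] with p hdensity hp
    set scales := {r : ℝ | ∃ y, p ∈ closedBall y (K * r) ∧ Disjoint S (closedBall y r)}
    have : NeBot (𝓝[>] (0 : ℝ) ⊓ 𝓟 scales) := frequently_iff_neBot.mp (hS p hp)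
    have : Nonempty X := ⟨p⟩
    choose! y hpy hdisj using fun r (hr : r ∈ scales) => hr
    have hone := hdensity y id (tendsto_id.mono_left inf_le_left)
      (eventually_inf_principal.mpr (.of_forall hpy))
    have hzero : ∀ᶠ r in 𝓝[>] (0 : ℝ) ⊓ 𝓟 scales,
        0 = μ (S ∩ closedBall (y r) r) / μ (closedBall (y r) r) :=
      eventually_inf_principal.mpr <| .of_forall fun r hr => by
        rw [(hdisj r hr).inter_eq, measure_empty, ENNReal.zero_div]
    exact zero_ne_one (tendsto_nhds_unique (tendsto_const_nhds.congr' hzero) hone)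
  simpa only [ae_iff, not_not, ofPred_mem_eq, Measure.restrict_apply_self] using hnotMem

theorem isPorousAt_of_disjoint_ball {E : Type*} [NormedAddCommGroup E] [NormedSpace ℝ E]
    {S : Set E} {p a : E} (hap : a ≠ p) (hS : Disjoint S (ball a (dist a p))) :
    IsPorousAt 2 S p := by
  have hd : 0 < dist a p := dist_pos.mpr hap
  refine Eventually.frequently ?_
  filter_upwards [Ioo_mem_nhdsGT (half_pos hd)] with r ⟨hr, hrd⟩
  have hcoeff : 0 ≤ 2 * r / dist a p := by positivity
  have hcoeff' : 2 * r / dist a p ≤ 1 := (div_le_one hd).mpr (by linarith)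
  refine ⟨lineMap p a (2 * r / dist a p), ?_, hS.mono_right (closedBall_subset_ball' ?_)⟩
  · rw [mem_closedBall, dist_left_lineMap, Real.norm_of_nonneg hcoeff, dist_comm p a,
      div_mul_cancel₀ _ hd.ne']
  · rw [dist_lineMap_right, Real.norm_of_nonneg (sub_nonneg.mpr hcoeff'), dist_comm p a, sub_mul,
      div_mul_cancel₀ _ hd.ne']
    linarith

end Porosity

theorem addHaar_le_mul_addHaar_image_of_antilipschitzWith {E : Type*} [NormedAddCommGroup E]
    [NormedSpace ℝ E] [FiniteDimensional ℝ E] [MeasurableSpace E] [BorelSpace E] (μ : Measure E)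
    [μ.IsAddHaarMeasure] {K : ℝ≥0} {f : E → E} (hf : AntilipschitzWith K f) (s : Set E) :
    μ s ≤ (K : ℝ≥0∞) ^ finrank ℝ E * μ (f '' s) := by
  rw [Measure.isAddLeftInvariant_eq_smul μ (Measure.hausdorffMeasure (finrank ℝ E)),
    Measure.smul_apply, Measure.smul_apply, mul_smul_comm]
  gcongr
  simpa only [ENNReal.rpow_natCast] using hf.le_hausdorffMeasure_image (Nat.cast_nonneg _) s

theorem measurableSet_of_isSigmaCompact {X : Type*} [TopologicalSpace X] [T2Space X]
    [MeasurableSpace X] [OpensMeasurableSpace X] {s : Set X} (hs : IsSigmaCompact s) :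
    MeasurableSet s := by
  obtain ⟨K, hK, rfl⟩ := hs
  exact MeasurableSet.iUnion fun n => (hK n).measurableSet

/-- `b` is a nearest point of `B` to `a`, that is, a value at `a` of the multivalued metric
projection onto `B`. -/
structure IsNearestPoint {X : Type*} [PseudoMetricSpace X] (B : Set X) (a b : X) : Prop where
  mem : b ∈ B
  dist_eq : dist a b = infDist a B

theorem exists_isNearestPoint_of_isClosed {X : Type*} [PseudoMetricSpace X] [ProperSpace X]
    {B : Set X} (hB : IsClosed B) (hBne : B.Nonempty) (a : X) : ∃ b, IsNearestPoint B a b := by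
  obtain ⟨b, hb, h⟩ := hB.exists_infDist_eq_dist hBne a
  exact ⟨b, hb, h.symm⟩

theorem isClosed_setOf_isNearestPoint {X : Type*} [PseudoMetricSpace X] {B : Set X}
    (hB : IsClosed B) : IsClosed {q : X × X | IsNearestPoint B q.1 q.2} := by
  have hinter : {q : X × X | IsNearestPoint B q.1 q.2} =
      Prod.snd ⁻¹' B ∩ {q | dist q.1 q.2 = infDist q.1 B} :=
    Set.ext fun _ => ⟨fun h => ⟨h.mem, h.dist_eq⟩, fun h => ⟨h.1, h.2⟩⟩
  rw [hinter]
  exact (hB.preimage continuous_snd).inter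
    (isClosed_eq continuous_dist ((continuous_infDist_pt B).comp continuous_fst))

theorem mul_infDist_lt_mul_infDist_of_mem_ball {X : Type*} [PseudoMetricSpace X] {A B : Set X}
    {a q : X} {α : ℝ} (hα : α ∈ Ioo (0 : ℝ) 1) (ha : a ∈ A) (hq : q ∈ ball a (α * infDist a B)) :
    (1 - α) * infDist q A < α * infDist q B := by
  have hα' : 0 < 1 - α := sub_pos.mpr hα.2
  rw [mem_ball] at hq
  have htriangle : infDist a B ≤ infDist q B + dist a q := infDist_le_infDist_add_dist
  rw [dist_comm] at htriangle
  calc (1 - α) * infDist q A ≤ (1 - α) * dist q a :=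
        mul_le_mul_of_nonneg_left (infDist_le_dist_of_mem ha) hα'.le
    _ < (1 - α) * (α * infDist a B) := mul_lt_mul_of_pos_left hq hα'
    _ = α * (infDist a B - α * infDist a B) := by ring
    _ < α * (infDist a B - dist q a) := mul_lt_mul_of_pos_left (sub_lt_sub_left hq _) hα.1
    _ ≤ α * infDist q B := mul_le_mul_of_nonneg_left (by linarith) hα.1.le

/-- One half of the Voronoi morph, in any normed space: each point of `A` is moved a fraction `α`
of the way towards each of its nearest points in `B`. -/
def halfMorph {E : Type*} [NormedAddCommGroup E] [NormedSpace ℝ E] (A B : Set E) (α : ℝ) : Set E :=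
  {p | ∃ a ∈ A, ∃ b, IsNearestPoint B a b ∧ lineMap a b α = p}

section NormedSpace

variable {E : Type*} [NormedAddCommGroup E] [NormedSpace ℝ E] {A B : Set E} {a b p : E} {α : ℝ}

theorem IsNearestPoint.dist_lineMap (h : IsNearestPoint B a b) (hα : 0 ≤ α) :
    dist a (lineMap a b α) = α * infDist a B := by
  rw [dist_left_lineMap, Real.norm_of_nonneg hα, h.dist_eq]

theorem IsNearestPoint.infDist_lineMap (h : IsNearestPoint B a b) (hα : α ∈ Icc (0 : ℝ) 1) :
    infDist (lineMap a b α) B = (1 - α) * infDist a B := by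
  refine le_antisymm ?_ ?_
  · calc infDist (lineMap a b α) B ≤ dist (lineMap a b α) b := infDist_le_dist_of_mem h.mem
      _ = (1 - α) * infDist a B := by
        rw [dist_lineMap_right, Real.norm_of_nonneg (sub_nonneg.mpr hα.2), h.dist_eq]
  · have htriangle : infDist a B ≤ infDist (lineMap a b α) B + dist a (lineMap a b α) :=
      infDist_le_infDist_add_dist
    rw [h.dist_lineMap hα.1] at htriangle
    linarith

theorem mul_infDist_le_mul_infDist_of_mem_halfMorph (hα : α ∈ Icc (0 : ℝ) 1)
    (hp : p ∈ halfMorph A B α) :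
    (1 - α) * infDist p A ≤ α * infDist p B := by
  obtain ⟨a, ha, b, hab, rfl⟩ := hp
  calc (1 - α) * infDist (lineMap a b α) A
      ≤ (1 - α) * dist (lineMap a b α) a :=
        mul_le_mul_of_nonneg_left (infDist_le_dist_of_mem ha) (sub_nonneg.mpr hα.2)
    _ = α * infDist (lineMap a b α) B := by
        rw [dist_comm, hab.dist_lineMap hα.1, hab.infDist_lineMap hα]
        ring

theorem IsNearestPoint.lineMap_mem_iff (hB : IsClosed B) (h : IsNearestPoint B a b)
    (hα : α ∈ Ico (0 : ℝ) 1) : lineMap a b α ∈ B ↔ a ∈ B := by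
  rw [hB.mem_iff_infDist_zero ⟨b, h.mem⟩, hB.mem_iff_infDist_zero ⟨b, h.mem⟩,
    h.infDist_lineMap ⟨hα.1, hα.2.le⟩, mul_eq_zero_iff_left (sub_pos.mpr hα.2).ne']

theorem halfMorph_sdiff (hB : IsClosed B) (hα : α ∈ Ico (0 : ℝ) 1) :
    halfMorph (A \ B) B α = halfMorph A B α \ B := by
  ext p
  constructor
  · rintro ⟨a, ⟨ha, haB⟩, b, hab, rfl⟩
    exact ⟨⟨a, ha, b, hab, rfl⟩, mt (hab.lineMap_mem_iff hB hα).mp haB⟩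
  · rintro ⟨⟨a, ha, b, hab, rfl⟩, hp⟩
    exact ⟨a, ⟨ha, mt (hab.lineMap_mem_iff hB hα).mpr hp⟩, b, hab, rfl⟩

theorem halfMorph_inter_self (hB : IsClosed B) (hα : α ∈ Ico (0 : ℝ) 1) :
    halfMorph A B α ∩ B = A ∩ B := by
  ext p
  constructor
  · rintro ⟨⟨a, ha, b, hab, rfl⟩, hp⟩
    have haB : a ∈ B := (hab.lineMap_mem_iff hB hα).mp hp
    have heq : a = b := dist_eq_zero.mp (hab.dist_eq.trans (infDist_zero_of_mem haB))
    rw [← heq, lineMap_same_apply]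
    exact ⟨ha, haB⟩
  · rintro ⟨hpA, hpB⟩
    exact ⟨⟨p, hpA, p, ⟨hpB, by rw [dist_self, infDist_zero_of_mem hpB]⟩,
      lineMap_same_apply p α⟩, hpB⟩

theorem isPorousAt_halfMorph_inter_halfMorph_sdiff (hB : IsClosed B) (hα : α ∈ Ioo (0 : ℝ) 1)
    (hp : p ∈ (halfMorph A B α ∩ halfMorph B A (1 - α)) \ B) :
    IsPorousAt 2 ((halfMorph A B α ∩ halfMorph B A (1 - α)) \ B) p := by
  obtain ⟨⟨⟨a, ha, b, hab, rfl⟩, -⟩, hpB⟩ := hp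
  have haB : a ∉ B := mt (hab.lineMap_mem_iff hB ⟨hα.1.le, hα.2⟩).mpr hpB
  have hinfDist : 0 < infDist a B := (hB.notMem_iff_infDist_pos ⟨b, hab.mem⟩).mp haB
  have hdist : dist a (lineMap a b α) = α * infDist a B := hab.dist_lineMap hα.1.le
  refine isPorousAt_of_disjoint_ball (a := a) ?_ ?_
  · exact dist_pos.mp (hdist ▸ mul_pos hα.1 hinfDist)
  · rw [hdist, Set.disjoint_left]
    rintro q ⟨⟨-, hq⟩, -⟩ hqball
    have hle := mul_infDist_le_mul_infDist_of_mem_halfMorph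
      (Icc.one_sub_mem (Ioo_subset_Icc_self hα)) hq
    rw [sub_sub_cancel] at hle
    exact hle.not_gt (mul_infDist_lt_mul_infDist_of_mem_ball hα ha hqball)

variable [FiniteDimensional ℝ E] [MeasurableSpace E] [BorelSpace E]

theorem measurableSet_halfMorph (hA : IsClosed A) (hB : IsClosed B) :
    MeasurableSet (halfMorph A B α) := by
  have := FiniteDimensional.proper_real E
  have hclosed : IsClosed (Prod.fst ⁻¹' A ∩ {q : E × E | IsNearestPoint B q.1 q.2}) :=
    (hA.preimage continuous_fst).inter (isClosed_setOf_isNearestPoint hB)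
  have himage : halfMorph A B α = (fun q : E × E => lineMap q.1 q.2 α) ''
      (Prod.fst ⁻¹' A ∩ {q | IsNearestPoint B q.1 q.2}) := by
    ext p
    constructor
    · rintro ⟨a, ha, b, hab, rfl⟩
      exact ⟨(a, b), ⟨ha, hab⟩, rfl⟩
    · rintro ⟨⟨a, b⟩, ⟨ha, hab⟩, rfl⟩
      exact ⟨a, ha, b, hab, rfl⟩
  rw [himage]
  simp only [lineMap_apply_module]
  exact measurableSet_of_isSigmaCompact <|
    (isSigmaCompact_univ.of_isClosed_subset hclosed (subset_univ _)).image (by fun_prop)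

theorem measure_halfMorph_inter_halfMorph_sdiff (μ : Measure E) [μ.IsAddHaarMeasure]
    (hB : IsClosed B) (hα : α ∈ Ioo (0 : ℝ) 1) :
    μ ((halfMorph A B α ∩ halfMorph B A (1 - α)) \ B) = 0 :=
  measure_eq_zero_of_forall_isPorousAt μ fun _ =>
    isPorousAt_halfMorph_inter_halfMorph_sdiff hB hα

end NormedSpace

section InnerProductSpace

variable {E : Type*} [NormedAddCommGroup E] [InnerProductSpace ℝ E] {A B : Set E} {α : ℝ}

theorem norm_le_norm_add_of_inner_nonneg {u v : E} (h : 0 ≤ ⟪u, v⟫) : ‖u‖ ≤ ‖u + v‖ := by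
  refine le_of_sq_le_sq ?_ (norm_nonneg _)
  rw [norm_add_sq_real]
  nlinarith [sq_nonneg ‖v‖]

theorem IsNearestPoint.inner_sub_sub_nonneg {a a' b b' : E} (h : IsNearestPoint B a b)
    (h' : IsNearestPoint B a' b') : 0 ≤ ⟪a - a', b - b'⟫ := by
  have hle : ‖a - b‖ ^ 2 ≤ ‖a - b'‖ ^ 2 := by
    rw [← dist_eq_norm, ← dist_eq_norm, h.dist_eq]
    gcongr
    exacts [infDist_nonneg, infDist_le_dist_of_mem h'.mem]
  have hle' : ‖a' - b'‖ ^ 2 ≤ ‖a' - b‖ ^ 2 := by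
    rw [← dist_eq_norm, ← dist_eq_norm, h'.dist_eq]
    gcongr
    exacts [infDist_nonneg, infDist_le_dist_of_mem h.mem]
  have hpolar : 2 * ⟪a - a', b - b'⟫ =
      (‖a - b'‖ ^ 2 - ‖a - b‖ ^ 2) + (‖a' - b‖ ^ 2 - ‖a' - b'‖ ^ 2) := by
    simp only [norm_sub_sq_real, inner_sub_left, inner_sub_right]
    ring
  linarith

theorem IsNearestPoint.mul_dist_le_dist_lineMap_lineMap {a a' b b' : E}
    (h : IsNearestPoint B a b) (h' : IsNearestPoint B a' b') (hα : α ∈ Icc (0 : ℝ) 1) :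
    (1 - α) * dist a a' ≤ dist (lineMap a b α) (lineMap a' b' α) := by
  have hα' : 0 ≤ 1 - α := sub_nonneg.mpr hα.2
  have hinner : 0 ≤ ⟪(1 - α) • (a - a'), α • (b - b')⟫ := by
    rw [real_inner_smul_left, real_inner_smul_right]
    exact mul_nonneg hα' (mul_nonneg hα.1 (h.inner_sub_sub_nonneg h'))
  calc (1 - α) * dist a a' = ‖(1 - α) • (a - a')‖ := by
        rw [norm_smul, Real.norm_of_nonneg hα', dist_eq_norm]
    _ ≤ ‖(1 - α) • (a - a') + α • (b - b')‖ := norm_le_norm_add_of_inner_nonneg hinner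
    _ = dist (lineMap a b α) (lineMap a' b' α) := by
        rw [dist_eq_norm, lineMap_apply_module, lineMap_apply_module]
        congr 1
        module

variable [FiniteDimensional ℝ E] [MeasurableSpace E] [BorelSpace E] (μ : Measure E)
  [μ.IsAddHaarMeasure]

theorem mul_measure_le_measure_halfMorph (X : Set E) (hB : IsClosed B) (hBne : B.Nonempty)
    (hα : α ∈ Ico (0 : ℝ) 1) :
    ENNReal.ofReal ((1 - α) ^ finrank ℝ E) * μ X ≤ μ (halfMorph X B α) := by
  have := FiniteDimensional.proper_real E
  have hα' : 0 < 1 - α := sub_pos.mpr hα.2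
  choose proj hproj using exists_isNearestPoint_of_isClosed hB hBne
  have hanti : AntilipschitzWith (Real.toNNReal (1 - α)⁻¹) fun a => lineMap a (proj a) α :=
    AntilipschitzWith.of_le_mul_dist fun a a' => by
      rw [Real.coe_toNNReal _ (inv_nonneg.mpr hα'.le), le_inv_mul_iff₀ hα']
      exact (hproj a).mul_dist_le_dist_lineMap_lineMap (hproj a') ⟨hα.1, hα.2.le⟩
  calc ENNReal.ofReal ((1 - α) ^ finrank ℝ E) * μ X
      ≤ ENNReal.ofReal ((1 - α) ^ finrank ℝ E) * (ENNReal.ofReal (1 - α)⁻¹ ^ finrank ℝ E *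
          μ ((fun a => lineMap a (proj a) α) '' X)) := by
        gcongr
        exact addHaar_le_mul_addHaar_image_of_antilipschitzWith μ hanti X
    _ = μ ((fun a => lineMap a (proj a) α) '' X) := by
        rw [← mul_assoc, ENNReal.ofReal_pow hα'.le, ← mul_pow, ← ENNReal.ofReal_mul hα'.le,
          mul_inv_cancel₀ hα'.ne', ENNReal.ofReal_one, one_pow, one_mul]
    _ ≤ μ (halfMorph X B α) :=
        measure_mono (image_subset_iff.mpr fun a ha => ⟨a, ha, proj a, hproj a, rfl⟩)

theorem measure_inter_add_measure_sdiff_le_measure_halfMorph_union (hA : IsClosed A)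
    (hAne : A.Nonempty) (hB : IsClosed B) (hBne : B.Nonempty) (hα : α ∈ Ioo (0 : ℝ) 1) :
    μ (A ∩ B) + (ENNReal.ofReal ((1 - α) ^ finrank ℝ E) * μ (A \ B) +
      ENNReal.ofReal (α ^ finrank ℝ E) * μ (B \ A)) ≤
        μ (halfMorph A B α ∪ halfMorph B A (1 - α)) := by
  have hα₁ : α ∈ Ico (0 : ℝ) 1 := ⟨hα.1.le, hα.2⟩
  have hα₂ : 1 - α ∈ Ico (0 : ℝ) 1 := ⟨sub_nonneg.mpr hα.2.le, sub_lt_self 1 hα.1⟩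
  have hleA := mul_measure_le_measure_halfMorph μ (A \ B) hB hBne hα₁
  have hleB := mul_measure_le_measure_halfMorph μ (B \ A) hA hAne hα₂
  rw [halfMorph_sdiff hB hα₁] at hleA
  rw [halfMorph_sdiff hA hα₂, sub_sub_cancel] at hleB
  have hnull : AEDisjoint μ (halfMorph A B α) (halfMorph B A (1 - α) \ A) := by
    refine measure_mono_null ?_ (measure_halfMorph_inter_halfMorph_sdiff (A := A) μ hB hα)
    rintro p ⟨hpA, hpB, hp⟩
    exact ⟨⟨hpA, hpB⟩, fun h => hp ((halfMorph_inter_self hB hα₁).subset ⟨hpA, h⟩).1⟩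
  calc _ ≤ μ (halfMorph A B α ∩ B) + (μ (halfMorph A B α \ B) +
        μ (halfMorph B A (1 - α) \ A)) := by
        rw [halfMorph_inter_self hB hα₁]
        gcongr
    _ = μ (halfMorph A B α) + μ (halfMorph B A (1 - α) \ A) := by
        rw [← add_assoc, measure_inter_add_sdiff _ hB.measurableSet]
    _ = μ (halfMorph A B α ∪ halfMorph B A (1 - α) \ A) :=
        (measure_union₀' (measurableSet_halfMorph hA hB).nullMeasurableSet hnull).symm
    _ ≤ μ (halfMorph A B α ∪ halfMorph B A (1 - α)) := by
        gcongr
        exact sdiff_subset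

theorem voronoiMorph_volume_lower_bound_general [Nontrivial E] (hA : IsClosed A)
    (hAne : A.Nonempty) (hB : IsClosed B) (hBne : B.Nonempty) (hα : α ∈ Ioo (0 : ℝ) 1) :
    ENNReal.ofReal ((1 - α) ^ finrank ℝ E) * μ A + ENNReal.ofReal (α ^ finrank ℝ E) * μ B ≤
      μ (halfMorph A B α ∪ halfMorph B A (1 - α)) := by
  have hα' : 0 ≤ 1 - α := sub_nonneg.mpr hα.2.le
  have hcoeff : ENNReal.ofReal ((1 - α) ^ finrank ℝ E) + ENNReal.ofReal (α ^ finrank ℝ E) ≤ 1 := by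
    rw [← ENNReal.ofReal_add (pow_nonneg hα' _) (pow_nonneg hα.1.le _), ENNReal.ofReal_le_one]
    have hfinrank : finrank ℝ E ≠ 0 := finrank_pos.ne'
    linarith [pow_le_of_le_one hα' (sub_le_self 1 hα.1.le) hfinrank,
      pow_le_of_le_one hα.1.le hα.2.le hfinrank]
  refine le_trans ?_
    (measure_inter_add_measure_sdiff_le_measure_halfMorph_union μ hA hAne hB hBne hα)
  rw [← measure_inter_add_sdiff A hB.measurableSet, ← measure_inter_add_sdiff B hA.measurableSet,
    inter_comm B A, mul_add, mul_add, add_add_add_comm, ← add_mul]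
  gcongr
  exact mul_le_of_le_one_left zero_le hcoeff

end InnerProductSpace

theorem voronoiMorph_eq_halfMorph_union_halfMorph (A B : Set Plane) (α : ℝ) :
    voronoiMorph A B α = halfMorph A B α ∪ halfMorph B A (1 - α) := by
  ext p
  constructor
  · rintro (⟨a, ha, b, hb, hab, rfl⟩ | ⟨b, hb, a, ha, hba, rfl⟩)
    · exact Or.inl ⟨a, ha, b, ⟨hb, hab⟩, lineMap_apply_module a b α⟩
    · exact Or.inr ⟨b, hb, a, ⟨ha, hba⟩, by rw [lineMap_apply_one_sub, lineMap_apply_module]⟩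
  · rintro (⟨a, ha, b, hab, rfl⟩ | ⟨b, hb, a, hba, rfl⟩)
    · exact Or.inl ⟨a, ha, b, hab.mem, hab.dist_eq, lineMap_apply_module a b α⟩
    · exact Or.inr ⟨b, hb, a, hba.mem, hba.dist_eq, by
        rw [lineMap_apply_one_sub, lineMap_apply_module]⟩

open MeasureTheory in
theorem voronoiMorph_volume_lower_bound (A B : Set Plane) (hAne : A.Nonempty)
    (hBne : B.Nonempty) (hA : IsCompact A) (hB : IsCompact B)
    (α : ℝ) (hα : α ∈ Set.Ioo (0 : ℝ) 1) :
    ENNReal.ofReal ((1 - α) ^ 2) * volume A + ENNReal.ofReal (α ^ 2) * volume B ≤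
      volume (voronoiMorph A B α) := by
  rw [voronoiMorph_eq_halfMorph_union_halfMorph]
  simpa using voronoiMorph_volume_lower_bound_general volume hA.isClosed hAne hB.isClosed hBne hα
end
end
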